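/- arXiv:2110.00952 — 8 statements merged into one kernel-verified Lean document; each statement's English description precedes it below -/
import Mathlib

section
/- Let M be a k×k real matrix with nonnegative entries such that every column of M sums to 1 (a column-stochastic matrix). Then |det(M)| ≤ 1, and |det(M)| = 1 if and only if M is a permutation matrix. -/
/-!
Expanding `∏ j, ∑ i, |M i j|` gives the sum of `∏ j, |M (f j) j|` over all self-maps `f` of the
index set, of which the Leibniz formula for `det M` only sees the bijective ones. So `|det M|` is
at most the product of the column sums, and in the case of equality every choice `g` of one
nonzero entry per column is injective. Given one such choice `f`, necessarily a permutation,
replacing its entry in column `j` by another nonzero entry of that column would collide with the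
choice in a different column. Hence each column has a single nonzero entry, and in the stochastic
case this entry is `1`.
-/

open Matrix

lemma exists_perm_of_forall_choice_injective {α : Type*} [Finite α] {r : α → α → Prop}
    (hr : ∀ j, ∃ i, r i j) (hinj : ∀ g : α → α, (∀ j, r (g j) j) → Function.Injective g) :
    ∃ σ : Equiv.Perm α, ∀ i j, r i j → σ i = j := by
  classical
  choose f hf using hr
  let τ := Equiv.ofBijective f (Finite.injective_iff_bijective.1 (hinj f hf))
  refine ⟨τ.symm, fun i j hij => ?_⟩
  have hchoice : ∀ l, r (Function.update f j i l) l := by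
    intro l
    obtain rfl | hl := eq_or_ne l j
    · simpa using hij
    · simpa [hl] using hf l
  by_contra hne
  have hcollide : Function.update f j i (τ.symm i) = Function.update f j i j := by
    rw [Function.update_of_ne hne, Function.update_self]
    exact τ.apply_symm_apply i
  exact hne (hinj _ hchoice hcollide)

section Determinant

variable {n R S : Type*} [Fintype n] [DecidableEq n]

lemma sum_perm_eq_sum_injective [AddCommMonoid S] (F : (n → n) → S) :
    ∑ σ : Equiv.Perm n, F σ = ∑ f with Function.Injective f, F f := by
  refine Finset.sum_bij (fun σ _ => σ) (fun σ _ => by simpa using σ.injective)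
    (fun _ _ _ _ h => DFunLike.coe_injective h) (fun f hf => ?_) (fun _ _ => rfl)
  have hbij := Finite.injective_iff_bijective.1 (Finset.mem_filter.1 hf).2
  exact ⟨Equiv.ofBijective f hbij, Finset.mem_univ _, rfl⟩

lemma eq_permMatrix_of_sum_col_eq_one [AddCommMonoidWithOne R] {A : Matrix n n R}
    {σ : Equiv.Perm n} (hcol : ∀ j, ∑ i, A i j = 1) (hσ : ∀ i j, A i j ≠ 0 → σ i = j) :
    A = σ.permMatrix R := by
  ext i j
  rw [Equiv.Perm.permMatrix, PEquiv.toMatrix_toPEquiv_apply, Pi.single_apply]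
  split_ifs with h
  · have hzero : ∀ l, l ≠ i → A l j = 0 := fun l hl =>
      of_not_not fun hne => hl (σ.injective ((hσ l j hne).trans h))
    rw [← Fintype.sum_eq_single (f := fun l => A l j) i hzero, hcol j]
  · exact of_not_not fun hne => h (hσ i j hne).symm

variable [CommRing R] [Nontrivial R] [CommRing S] [LinearOrder S] [IsStrictOrderedRing S]
  {A : Matrix n n R} {abv : AbsoluteValue R S}

lemma abv_det_le_sum_injective (abv : AbsoluteValue R S) (A : Matrix n n R) :
    abv A.det ≤ ∑ f : n → n with Function.Injective f, ∏ j, abv (A (f j) j) :=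
  calc
    abv A.det ≤ ∑ σ : Equiv.Perm n, abv (Equiv.Perm.sign σ • ∏ j, A (σ j) j) := by
      rw [det_apply]
      exact abv.sum_le _ _
    _ = ∑ σ : Equiv.Perm n, ∏ j, abv (A (σ j) j) := by
      simp only [abv.map_units_int_smul, abv.map_prod]
    _ = ∑ f : n → n with Function.Injective f, ∏ j, abv (A (f j) j) :=
      sum_perm_eq_sum_injective fun f => ∏ j, abv (A (f j) j)

lemma abv_det_add_sum_not_injective_le_prod_sum (abv : AbsoluteValue R S) (A : Matrix n n R) :
    abv A.det + ∑ f : n → n with ¬Function.Injective f, ∏ j, abv (A (f j) j) ≤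
      ∏ j, ∑ i, abv (A i j) := by
  rw [Fintype.prod_sum fun j i => abv (A i j),
    ← Finset.sum_filter_add_sum_filter_not Finset.univ (fun f : n → n => Function.Injective f)]
  gcongr
  exact abv_det_le_sum_injective abv A

lemma abv_det_le_prod_sum (abv : AbsoluteValue R S) (A : Matrix n n R) :
    abv A.det ≤ ∏ j, ∑ i, abv (A i j) := by
  refine le_trans (le_add_of_nonneg_right ?_) (abv_det_add_sum_not_injective_le_prod_sum abv A)
  exact Finset.sum_nonneg fun f _ => Finset.prod_nonneg fun j _ => abv.nonneg _

lemma injective_of_abv_det_eq_prod_sum (hdet : abv A.det = ∏ j, ∑ i, abv (A i j))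
    {g : n → n} (hg : ∀ j, A (g j) j ≠ 0) : Function.Injective g := by
  by_contra hinj
  have hpos : 0 < ∏ j, abv (A (g j) j) := Finset.prod_pos fun j _ => abv.pos (hg j)
  have hle : ∏ j, abv (A (g j) j) ≤
      ∑ f : n → n with ¬Function.Injective f, ∏ j, abv (A (f j) j) :=
    Finset.single_le_sum (f := fun f : n → n => ∏ j, abv (A (f j) j))
      (fun f _ => Finset.prod_nonneg fun j _ => abv.nonneg _) (by simpa using hinj)
  linarith [abv_det_add_sum_not_injective_le_prod_sum abv A]

lemma exists_perm_of_abv_det_eq_prod_sum (hA : A.det ≠ 0)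
    (hdet : abv A.det = ∏ j, ∑ i, abv (A i j)) :
    ∃ σ : Equiv.Perm n, ∀ i j, A i j ≠ 0 → σ i = j := by
  refine exists_perm_of_forall_choice_injective (fun j => ?_)
    fun g => injective_of_abv_det_eq_prod_sum hdet
  by_contra! hzero
  exact hA (det_eq_zero_of_column_eq_zero j hzero)

lemma abv_det_permMatrix (abv : AbsoluteValue R S) (σ : Equiv.Perm n) :
    abv (σ.permMatrix R).det = 1 := by
  rw [det_permutation, abv.map_units_intCast]

end Determinant

section ColStochastic

variable {n R : Type*} [Fintype n] [DecidableEq n] [CommRing R] [LinearOrder R]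
  [IsStrictOrderedRing R] {M : Matrix n n R}

lemma prod_sum_abs_of_mem_colStochastic (hM : M ∈ colStochastic R n) :
    ∏ j, ∑ i, |M i j| = 1 := by
  simp only [abs_of_nonneg (nonneg_of_mem_colStochastic hM), sum_col_of_mem_colStochastic hM,
    Finset.prod_const_one]

theorem columnStochastic_abs_det_le_one_general (hM : M ∈ colStochastic R n) :
    |M.det| ≤ 1 ∧ (|M.det| = 1 ↔ ∃ σ : Equiv.Perm n, M = σ.permMatrix R) := by
  have hprod := prod_sum_abs_of_mem_colStochastic hM
  refine ⟨hprod ▸ abv_det_le_prod_sum AbsoluteValue.abs M, fun hdet => ?_, ?_⟩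
  · have hne : M.det ≠ 0 := abs_pos.1 (hdet ▸ one_pos)
    obtain ⟨σ, hσ⟩ := exists_perm_of_abv_det_eq_prod_sum (abv := AbsoluteValue.abs) hne
      (hdet.trans hprod.symm)
    exact ⟨σ, eq_permMatrix_of_sum_col_eq_one (sum_col_of_mem_colStochastic hM) hσ⟩
  · rintro ⟨σ, rfl⟩
    exact abv_det_permMatrix AbsoluteValue.abs σ

end ColStochastic

/-- A column-stochastic k×k real matrix `M` (nonnegative entries, every column
sums to 1) has `|det M| ≤ 1`, with equality iff `M` is a permutation matrix. -/
theorem columnStochastic_abs_det_le_one (k : ℕ) (M : Matrix (Fin k) (Fin k) ℝ)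
    (hnn : ∀ i j, 0 ≤ M i j) (hcol : ∀ j, ∑ i, M i j = 1) :
    |M.det| ≤ 1 ∧
    (|M.det| = 1 ↔ ∃ σ : Equiv.Perm (Fin k), M = σ.permMatrix ℝ) :=
  columnStochastic_abs_det_le_one_general (mem_colStochastic_iff_sum.2 ⟨hnn, hcol⟩)
end

section
/- (Legality of DMI-clustering.) Let C* be an n×k 0-1 matrix in which every row has exactly one entry equal to 1 and every column is nonzero (so C* has rank k), let B be an invertible k×k real matrix, and set A = C*B. Then for every n×k real matrix C with entries in [0,1] whose rows each sum to 1, we have |det(Cᵀ A)| ≤ |det(C*ᵀ A)|, and equality holds if and only if C = C*π for some k×k permutation matrix π. In particular, over both the hard constraint set {C ∈ {0,1}^{n×k} : each row sums to 1} and the soft constraint set {C ∈ [0,1]^{n×k} : each row sums to 1}, the maximizers of |det(Cᵀ A)| are exactly the column permutations of C*. -/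
open Matrix

/-!
Put `M = Cᵀ C*`; the factor `det B ≠ 0` cancels, so `det M` is to be compared with
`det (C*ᵀ C*) = ∏ n_d`, where `n_d` is the size of cluster `d`.  The entries of `M` are nonnegative
and its column `d` sums to `n_d`, so expanding the product of the column sums gives
`∏ n_d = ∑_f ∏_d M (f d) d` over all maps `f`.  The bijective `f` contribute the permanent of `M`,
which dominates `|det M|`.

In the equality case every non-injective `f` contributes zero, while some permutation `σ` has all
`M (σ d) d ≠ 0`.  Another nonzero entry `M c d` would give the non-injective map
`Function.update σ d c` a positive contribution.  So `M` is supported on the graph of `σ`, hence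
each row `i` of `C` is concentrated at `σ (g i)`, where `g i` is the cluster of `i` under `C*`.
-/

section NonnegativeMatrix

variable {κ R : Type*} [DecidableEq κ]

lemma not_injective_update_perm {σ : Equiv.Perm κ} {c d : κ} (hcd : c ≠ σ d) :
    ¬ (Function.update σ d c).Injective := by
  intro hinj
  have hne : σ.symm c ≠ d := fun h => hcd (by rw [← h, σ.apply_symm_apply])
  exact hne <| hinj <| by simp [Function.update_of_ne hne]

variable [Fintype κ]

lemma sum_bijective_prod_eq_permanent [CommSemiring R] (M : Matrix κ κ R) :
    ∑ f : κ → κ with f.Bijective, ∏ d, M (f d) d = M.permanent :=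
  Finset.sum_bij (fun f hf => Equiv.ofBijective f (Finset.mem_filter.1 hf).2)
    (fun _ _ => Finset.mem_univ _)
    (fun _ _ _ _ h => congrArg DFunLike.coe h)
    (fun σ _ => ⟨σ, by simp, Equiv.ext fun _ => rfl⟩)
    (fun _ _ => rfl)

lemma prod_col_sum_eq_permanent_add [CommSemiring R] (M : Matrix κ κ R) :
    ∏ d, ∑ c, M c d
      = M.permanent + ∑ f : κ → κ with ¬ f.Bijective, ∏ d, M (f d) d := by
  rw [← sum_bijective_prod_eq_permanent, Finset.sum_filter_add_sum_filter_not, Fintype.prod_sum]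

lemma permanent_le_prod_col_sum [CommSemiring R] [PartialOrder R] [IsOrderedRing R]
    {M : Matrix κ κ R} (hM : ∀ c d, 0 ≤ M c d) : M.permanent ≤ ∏ d, ∑ c, M c d := by
  rw [prod_col_sum_eq_permanent_add]
  exact le_add_of_nonneg_right <|
    Finset.sum_nonneg fun f _ => Finset.prod_nonneg fun d _ => hM (f d) d

lemma prod_apply_eq_zero_of_prod_col_sum_le_permanent
    [CommSemiring R] [PartialOrder R] [IsStrictOrderedRing R]
    {M : Matrix κ κ R} (hM : ∀ c d, 0 ≤ M c d) (hle : ∏ d, ∑ c, M c d ≤ M.permanent)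
    {f : κ → κ} (hf : ¬ f.Bijective) : ∏ d, M (f d) d = 0 := by
  have hnonneg : ∀ f : κ → κ, 0 ≤ ∏ d, M (f d) d :=
    fun f => Finset.prod_nonneg fun d _ => hM (f d) d
  rw [prod_col_sum_eq_permanent_add, add_le_iff_nonpos_right] at hle
  have hsum := hle.antisymm (Finset.sum_nonneg fun f _ => hnonneg f)
  exact (Finset.sum_eq_zero_iff_of_nonneg fun f _ => hnonneg f).1 hsum f (by simpa using hf)

lemma exists_perm_apply_eq_zero_of_prod_col_sum_le_permanent
    [CommSemiring R] [NoZeroDivisors R] [PartialOrder R] [IsStrictOrderedRing R]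
    {M : Matrix κ κ R} (hM : ∀ c d, 0 ≤ M c d) (hle : ∏ d, ∑ c, M c d ≤ M.permanent)
    (hperm : M.permanent ≠ 0) :
    ∃ σ : Equiv.Perm κ, ∀ c d, c ≠ σ d → M c d = 0 := by
  obtain ⟨σ, -, hσ⟩ := Finset.exists_ne_zero_of_sum_ne_zero hperm
  refine ⟨σ, fun c d hcd => ?_⟩
  obtain ⟨e, -, he⟩ := Finset.prod_eq_zero_iff.1 <|
    prod_apply_eq_zero_of_prod_col_sum_le_permanent hM hle
      fun hbij => not_injective_update_perm hcd hbij.injective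
  rcases eq_or_ne e d with rfl | hed
  · rwa [Function.update_self] at he
  · rw [Function.update_of_ne hed] at he
    exact absurd he (Finset.prod_ne_zero_iff.1 hσ e (Finset.mem_univ e))

variable [CommRing R] [LinearOrder R] [IsStrictOrderedRing R] {M : Matrix κ κ R}

lemma abs_det_le_permanent (hM : ∀ c d, 0 ≤ M c d) : |M.det| ≤ M.permanent := by
  rw [det_apply']
  refine (Finset.abs_sum_le_sum_abs _ _).trans_eq (Finset.sum_congr rfl fun σ _ => ?_)
  rw [abs_mul, abs_unit_intCast, one_mul, abs_of_nonneg (Finset.prod_nonneg fun d _ => hM (σ d) d)]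

lemma abs_det_le_prod_col_sum (hM : ∀ c d, 0 ≤ M c d) : |M.det| ≤ ∏ d, ∑ c, M c d :=
  (abs_det_le_permanent hM).trans (permanent_le_prod_col_sum hM)

lemma exists_perm_apply_eq_zero_of_abs_det_eq_prod_col_sum (hM : ∀ c d, 0 ≤ M c d)
    (heq : |M.det| = ∏ d, ∑ c, M c d) (hdet : M.det ≠ 0) :
    ∃ σ : Equiv.Perm κ, ∀ c d, c ≠ σ d → M c d = 0 :=
  exists_perm_apply_eq_zero_of_prod_col_sum_le_permanent hM (heq ▸ abs_det_le_permanent hM)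
    ((abs_pos.2 hdet).trans_le (abs_det_le_permanent hM)).ne'

end NonnegativeMatrix

/-- The hard clustering matrix of the assignment `g` of items to clusters: row `i` is the indicator
of the cluster `g i`. -/
def hardClustering {ι κ : Type*} [DecidableEq κ] (R : Type*) [Zero R] [One R] (g : ι → κ) :
    Matrix ι κ R :=
  fun i c => if g i = c then 1 else 0

section Clustering

lemma hardClustering_mul_permMatrix {ι κ R : Type*} [Fintype κ] [DecidableEq κ]
    [NonAssocSemiring R] (g : ι → κ) (σ : Equiv.Perm κ) :
    hardClustering R g * σ.permMatrix R = hardClustering R (σ ∘ g) := by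
  ext i c
  simp [hardClustering, PEquiv.mul_toMatrix_toPEquiv, Equiv.eq_symm_apply]

variable {ι κ R : Type*} [Fintype ι] [DecidableEq κ] {g : ι → κ} {C : Matrix ι κ R}

lemma transpose_mul_hardClustering_apply [NonAssocSemiring R] (C : Matrix ι κ R) (g : ι → κ)
    (c d : κ) : (Cᵀ * hardClustering R g) c d = ∑ i with g i = d, C i c := by
  simp [mul_apply, hardClustering, Finset.sum_filter]

lemma transpose_mul_hardClustering_nonneg [NonAssocSemiring R] [PartialOrder R]
    [IsOrderedAddMonoid R] (hC : ∀ i c, 0 ≤ C i c) (c d : κ) :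
    0 ≤ (Cᵀ * hardClustering R g) c d := by
  rw [transpose_mul_hardClustering_apply]
  exact Finset.sum_nonneg fun i _ => hC i c

lemma transpose_hardClustering_mul_self [NonAssocSemiring R] (g : ι → κ) :
    (hardClustering R g)ᵀ * hardClustering R g
      = diagonal fun d => (Finset.card {i | g i = d} : R) := by
  ext c d
  rw [transpose_mul_hardClustering_apply]
  rcases eq_or_ne c d with rfl | hcd
  · simp [hardClustering, Finset.filter_filter]
  · rw [diagonal_apply_ne _ hcd]
    refine Finset.sum_eq_zero fun i hi => if_neg ?_
    rw [(Finset.mem_filter.1 hi).2]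
    exact hcd.symm

variable [Fintype κ]

lemma col_sum_transpose_mul_hardClustering [NonAssocSemiring R]
    (hrow : ∀ i, ∑ c, C i c = 1) (d : κ) :
    ∑ c, (Cᵀ * hardClustering R g) c d = Finset.card {i | g i = d} := by
  simp_rw [transpose_mul_hardClustering_apply]
  rw [Finset.sum_comm]
  simp [hrow]

lemma det_transpose_hardClustering_mul_self [CommRing R] (g : ι → κ) :
    ((hardClustering R g)ᵀ * hardClustering R g).det
      = ∏ d, (Finset.card {i | g i = d} : R) := by
  rw [transpose_hardClustering_mul_self, det_diagonal]

lemma det_transpose_hardClustering_mul_self_pos [CommRing R] [PartialOrder R]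
    [IsStrictOrderedRing R] (hg : g.Surjective) :
    0 < ((hardClustering R g)ᵀ * hardClustering R g).det := by
  rw [det_transpose_hardClustering_mul_self]
  refine Finset.prod_pos fun d _ => Nat.cast_pos.2 (Finset.card_pos.2 ?_)
  obtain ⟨i, hi⟩ := hg d
  exact ⟨i, by simpa using hi⟩

lemma eq_hardClustering_comp_of_transpose_mul_apply_eq_zero [NonAssocSemiring R] [PartialOrder R]
    [IsOrderedAddMonoid R] (hC : ∀ i c, 0 ≤ C i c) (hrow : ∀ i, ∑ c, C i c = 1) {f : κ → κ}
    (hf : ∀ c d, c ≠ f d → (Cᵀ * hardClustering R g) c d = 0) :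
    C = hardClustering R (f ∘ g) := by
  have hzero : ∀ i c, c ≠ f (g i) → C i c = 0 := by
    intro i c hc
    have hsum := hf c (g i) hc
    rw [transpose_mul_hardClustering_apply,
      Finset.sum_eq_zero_iff_of_nonneg fun j _ => hC j c] at hsum
    exact hsum i (by simp)
  ext i c
  rcases eq_or_ne c (f (g i)) with rfl | hc
  · rw [← Fintype.sum_eq_single _ (hzero i), hrow]
    simp [hardClustering]
  · simp [hardClustering, hzero i c hc, hc.symm]

variable [CommRing R] [LinearOrder R] [IsStrictOrderedRing R]

lemma abs_det_transpose_mul_permMatrix_mul (C D : Matrix ι κ R) (σ : Equiv.Perm κ) :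
    |((C * σ.permMatrix R)ᵀ * D).det| = |(Cᵀ * D).det| := by
  rw [transpose_mul, Matrix.mul_assoc, det_mul, det_transpose, det_permutation, abs_mul,
    abs_unit_intCast, one_mul]

lemma abs_det_transpose_hardClustering_mul_self_eq_prod_col_sum (hrow : ∀ i, ∑ c, C i c = 1) :
    |((hardClustering R g)ᵀ * hardClustering R g).det|
      = ∏ d, ∑ c, (Cᵀ * hardClustering R g) c d := by
  simp_rw [det_transpose_hardClustering_mul_self, col_sum_transpose_mul_hardClustering hrow]
  exact abs_of_nonneg (Finset.prod_nonneg fun d _ => Nat.cast_nonneg _)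

lemma abs_det_transpose_mul_hardClustering_le (hC : ∀ i c, 0 ≤ C i c)
    (hrow : ∀ i, ∑ c, C i c = 1) :
    |(Cᵀ * hardClustering R g).det| ≤ |((hardClustering R g)ᵀ * hardClustering R g).det| := by
  rw [abs_det_transpose_hardClustering_mul_self_eq_prod_col_sum hrow]
  exact abs_det_le_prod_col_sum (transpose_mul_hardClustering_nonneg hC)

lemma abs_det_transpose_mul_hardClustering_eq_iff (hg : g.Surjective) (hC : ∀ i c, 0 ≤ C i c)
    (hrow : ∀ i, ∑ c, C i c = 1) :
    |(Cᵀ * hardClustering R g).det| = |((hardClustering R g)ᵀ * hardClustering R g).det| ↔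
      ∃ σ : Equiv.Perm κ, C = hardClustering R g * σ.permMatrix R := by
  refine ⟨fun heq => ?_, ?_⟩
  · have hdet : (Cᵀ * hardClustering R g).det ≠ 0 := by
      rw [← abs_ne_zero, heq, abs_ne_zero]
      exact (det_transpose_hardClustering_mul_self_pos hg).ne'
    rw [abs_det_transpose_hardClustering_mul_self_eq_prod_col_sum hrow] at heq
    obtain ⟨σ, hσ⟩ := exists_perm_apply_eq_zero_of_abs_det_eq_prod_col_sum
      (transpose_mul_hardClustering_nonneg hC) heq hdet
    exact ⟨σ, (eq_hardClustering_comp_of_transpose_mul_apply_eq_zero hC hrow hσ).trans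
      (hardClustering_mul_permMatrix g σ).symm⟩
  · rintro ⟨σ, rfl⟩
    exact abs_det_transpose_mul_permMatrix_mul _ _ σ

theorem dmi_clustering_legal_general (hg : g.Surjective) {B : Matrix κ κ R} (hB : B.det ≠ 0)
    (hC : ∀ i c, 0 ≤ C i c) (hrow : ∀ i, ∑ c, C i c = 1) :
    |(Cᵀ * (hardClustering R g * B)).det|
        ≤ |((hardClustering R g)ᵀ * (hardClustering R g * B)).det| ∧
      (|(Cᵀ * (hardClustering R g * B)).det|
          = |((hardClustering R g)ᵀ * (hardClustering R g * B)).det| ↔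
        ∃ σ : Equiv.Perm κ, C = hardClustering R g * σ.permMatrix R) := by
  have hBpos : 0 < |B.det| := abs_pos.2 hB
  simp only [← Matrix.mul_assoc, det_mul _ B, abs_mul]
  rw [mul_le_mul_iff_left₀ hBpos, mul_left_inj' hBpos.ne']
  exact ⟨abs_det_transpose_mul_hardClustering_le hC hrow,
    abs_det_transpose_mul_hardClustering_eq_iff hg hC hrow⟩

end Clustering

/-- **Legality of DMI-clustering.** If `C*` is a hard clustering matrix
(0-1, one 1 per row, encoded by the cluster assignment `g`) with every column nonzero
(`g` surjective), `B` is invertible and `A = C* B`, then every soft clustering matrix `C`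
(entries in `[0,1]`, rows summing to 1) satisfies `|det(Cᵀ A)| ≤ |det(C*ᵀ A)|`, with
equality iff `C = C* π` for a permutation matrix `π`. -/
theorem dmi_clustering_legal (n k : ℕ) (g : Fin n → Fin k)
    (Cstar : Matrix (Fin n) (Fin k) ℝ)
    (hCstar : Cstar = fun i c => if g i = c then 1 else 0)
    (hcolnonzero : Function.Surjective g)
    (B : Matrix (Fin k) (Fin k) ℝ) (hB : IsUnit B)
    (A : Matrix (Fin n) (Fin k) ℝ) (hA : A = Cstar * B) :
    ∀ C : Matrix (Fin n) (Fin k) ℝ,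
      (∀ i c, 0 ≤ C i c ∧ C i c ≤ 1) → (∀ i, ∑ c, C i c = 1) →
      |(Cᵀ * A).det| ≤ |(Cstarᵀ * A).det| ∧
      (|(Cᵀ * A).det| = |(Cstarᵀ * A).det| ↔
        ∃ σ : Equiv.Perm (Fin k), C = Cstar * σ.permMatrix ℝ) := by
  subst hCstar hA
  exact fun C hC hrow => dmi_clustering_legal_general hcolnonzero
    ((isUnit_iff_isUnit_det B).1 hB).ne_zero (fun i c => (hC i c).1) hrow
end

section
/- (Linearly-partitioned property.) Let Ã be an n×k real matrix and let C* be an n×k hard clustering matrix such that M = C*ᵀ Ã is invertible with det(M) > 0. For i ∈ [n] let c_i denote the cluster of row i under C*, let ã_i denote the i-th row of Ã, and let d*₁, …, d*_k denote the columns of D* = M⁻¹. Then the following are equivalent: (a) C* is a single-move local maximum, i.e., for every i ∈ [n] and every c ∈ [k], the hard clustering matrix C' obtained from C* by reassigning row i from cluster c_i to cluster c satisfies det(C'ᵀ Ã) ≤ det(M); (b) for every i ∈ [n] and every c ∈ [k], the inner product ã_i · d*_{c_i} ≥ ã_i · d*_c (i.e., C* ∈ idxmax(Ã D*)). -/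
/-!
Moving row `i` from cluster `g i` to cluster `c` changes `M = Cᵀ Ã` by the rank-one matrix
`(e_c - e_{g i}) ã_iᵀ`, so by the matrix determinant lemma `det M` gets multiplied by
`1 + ã_i · d_c - ã_i · d_{g i}`, where `d_c` is the `c`-th column of `M⁻¹`. As `det M > 0`, the
determinant does not increase precisely when `ã_i · d_c ≤ ã_i · d_{g i}`.
-/

open Matrix

section RowUpdate

variable {m n p R : Type*}

lemma updateRow_eq_add_vecMulVec [DecidableEq m] [NonAssocRing R] (C : Matrix m n R) (i : m)
    (v : n → R) : C.updateRow i v = C + vecMulVec (Pi.single i 1) (v - C i) := by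
  ext j c
  obtain rfl | hji := eq_or_ne j i
  · simp [vecMulVec_apply]
  · simp [vecMulVec_apply, hji]

lemma transpose_updateRow_mul [DecidableEq m] [Fintype m] [CommRing R] (C : Matrix m n R)
    (A : Matrix m p R) (i : m) (v : n → R) :
    (C.updateRow i v)ᵀ * A = Cᵀ * A + vecMulVec (v - C i) (A i) := by
  rw [updateRow_eq_add_vecMulVec, transpose_add, transpose_vecMulVec, Matrix.add_mul,
    vecMulVec_mul, single_one_vecMul, Matrix.row]

variable [Fintype n] [DecidableEq n] [CommRing R]

lemma det_add_vecMulVec {M : Matrix n n R} (hM : IsUnit M) (u v : n → R) :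
    (M + vecMulVec u v).det = M.det * (1 + v ᵥ* M⁻¹ ⬝ᵥ u) := by
  rw [vecMulVec_eq Unit, det_add_replicateCol_mul_replicateRow ((isUnit_iff_isUnit_det M).mp hM),
    ← replicateRow_vecMul, det_unique (n := Unit), Matrix.add_apply, one_apply_eq,
    replicateRow_mul_replicateCol_apply]

lemma det_transpose_updateRow_mul [Fintype m] [DecidableEq m] {C A : Matrix m n R}
    (hCA : IsUnit (Cᵀ * A)) (i : m) (v : n → R) :
    ((C.updateRow i v)ᵀ * A).det =
      (Cᵀ * A).det * (1 + (A * (Cᵀ * A)⁻¹) i ⬝ᵥ (v - C i)) := by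
  rw [transpose_updateRow_mul, det_add_vecMulVec hCA, mul_apply_eq_vecMul]

end RowUpdate

section Clustering

variable {m n R : Type*} [DecidableEq n]

variable (R) in
/-- The hard clustering matrix of the cluster assignment `g`, which puts row `i` into cluster
`g i`. -/
def clusterMatrix [Zero R] [One R] (g : m → n) : Matrix m n R :=
  of fun i c => if g i = c then 1 else 0

lemma clusterMatrix_row [Zero R] [One R] (g : m → n) (i : m) :
    clusterMatrix R g i = Pi.single (g i) 1 := by
  ext c
  simp only [clusterMatrix, of_apply, Pi.single_apply, eq_comm]

lemma clusterMatrix_update [DecidableEq m] [Zero R] [One R] (g : m → n) (i : m) (c : n) :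
    clusterMatrix R (Function.update g i c) =
      (clusterMatrix R g).updateRow i (Pi.single c 1) := by
  ext j : 1
  obtain rfl | hji := eq_or_ne j i
  · rw [clusterMatrix_row, Function.update_self, updateRow_self]
  · rw [clusterMatrix_row, Function.update_of_ne hji, updateRow_ne hji, clusterMatrix_row]

variable [Fintype m] [DecidableEq m] [Fintype n] [CommRing R] {A : Matrix m n R} {g : m → n}

lemma det_transpose_clusterMatrix_update_mul (hM : IsUnit ((clusterMatrix R g)ᵀ * A))
    (i : m) (c : n) :
    ((clusterMatrix R (Function.update g i c))ᵀ * A).det =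
      ((clusterMatrix R g)ᵀ * A).det *
        (1 + ((A * ((clusterMatrix R g)ᵀ * A)⁻¹) i c -
          (A * ((clusterMatrix R g)ᵀ * A)⁻¹) i (g i))) := by
  rw [clusterMatrix_update, det_transpose_updateRow_mul hM, clusterMatrix_row, dotProduct_sub,
    dotProduct_single_one, dotProduct_single_one]

/-- The cluster assignment `g` is a single-move local maximum of `C ↦ det (Cᵀ * A)`: no
reassignment of one row increases the determinant. A move is encoded as a `Function.update`
of `g`. -/
def IsSingleMoveLocalMax [LE R] (A : Matrix m n R) (g : m → n) : Prop :=
  ∀ i c, ((clusterMatrix R (Function.update g i c))ᵀ * A).det ≤ ((clusterMatrix R g)ᵀ * A).det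

theorem dmi_clustering_linearly_partitioned_general [LinearOrder R] [IsStrictOrderedRing R]
    (hM : IsUnit ((clusterMatrix R g)ᵀ * A)) (hdet : 0 < ((clusterMatrix R g)ᵀ * A).det) :
    IsSingleMoveLocalMax A g ↔
      ∀ i c, (A * ((clusterMatrix R g)ᵀ * A)⁻¹) i c ≤
        (A * ((clusterMatrix R g)ᵀ * A)⁻¹) i (g i) := by
  refine forall₂_congr fun i c => ?_
  rw [det_transpose_clusterMatrix_update_mul hM, mul_le_iff_le_one_right hdet,
    add_le_iff_nonpos_right, sub_nonpos]

end Clustering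

/-- **Linearly-partitioned property.** For a hard clustering matrix `C*`
(encoded by cluster assignment `g`) with `M = C*ᵀ Ã` invertible and `det M > 0`,
`C*` is a single-move local maximum of `C ↦ det(Cᵀ Ã)` (reassigning one row's cluster never
increases the determinant) iff for every row `i` and cluster `c`, the inner product of the
`i`-th row of `Ã` with the `g i`-th column of `D* = M⁻¹` is at least that with the `c`-th
column, i.e. `C* ∈ idxmax(Ã D*)`. -/
theorem dmi_clustering_linearly_partitioned (n k : ℕ)
    (Atil : Matrix (Fin n) (Fin k) ℝ)
    (g : Fin n → Fin k) (Cstar : Matrix (Fin n) (Fin k) ℝ)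
    (hCstar : Cstar = fun i c => if g i = c then 1 else 0)
    (M : Matrix (Fin k) (Fin k) ℝ) (hM : M = Cstarᵀ * Atil)
    (hMinv : IsUnit M) (hdet : 0 < M.det) :
    (∀ i : Fin n, ∀ c : Fin k,
        (((fun i' c' => if Function.update g i c i' = c' then (1 : ℝ) else 0) :
            Matrix (Fin n) (Fin k) ℝ)ᵀ * Atil).det ≤ M.det)
    ↔ (∀ i : Fin n, ∀ c : Fin k, (Atil * M⁻¹) i c ≤ (Atil * M⁻¹) i (g i)) := by
  subst hCstar hM
  exact dmi_clustering_linearly_partitioned_general hMinv hdet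
end

section
/- Let Ã be an n×k real matrix and C an n×k hard clustering matrix such that M = Cᵀ Ã is invertible. Let ā = (1/n) Σᵢ ãᵢ be the mean of the rows of Ã. Then ā · M⁻¹ = (1/n) · 1ᵀ, i.e., every entry of the row vector ā M⁻¹ equals 1/n. (Geometrically, the mean of all data points lies in the intersection of all the linear partition boundaries determined by D* = M⁻¹.) -/
open Matrix

/-! Since the rows of `C` sum to `1`, that is `C 1 = 1`, we have
`1ᵀ M = (C 1)ᵀ Ã = 1ᵀ Ã`, which is the sum of the rows of `Ã`. Multiplying by `M⁻¹` on the right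
and dividing by `n` gives `ā M⁻¹ = (1/n) 1ᵀ`. -/

/-- The hard clustering matrix that puts the data point `i` into the cluster `g i`. Encoding the
clustering by a function `g` ensures that each row has exactly one `1`. -/
def hardClusteringMatrix {m k : Type*} [DecidableEq k] (R : Type*) [Zero R] [One R] (g : m → k) :
    Matrix m k R :=
  fun i c => if g i = c then 1 else 0

theorem hardClusteringMatrix_mulVec {m k R : Type*} [Fintype k] [DecidableEq k]
    [NonAssocSemiring R] (g : m → k) (v : k → R) :
    hardClusteringMatrix R g *ᵥ v = v ∘ g := by
  ext i
  simp [hardClusteringMatrix, mulVec, dotProduct]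

section RowSums

variable {m k R : Type*} [Fintype m] [Fintype k] [DecidableEq k] [CommRing R] {A C : Matrix m k R}

theorem mulVec_vecMul_vecMul_inv_transpose_mul (hM : IsUnit (Cᵀ * A)) (v : k → R) :
    (C *ᵥ v) ᵥ* A ᵥ* (Cᵀ * A)⁻¹ = v := by
  have hdet : IsUnit (Cᵀ * A).det := (isUnit_iff_isUnit_det _).mp hM
  calc (C *ᵥ v) ᵥ* A ᵥ* (Cᵀ * A)⁻¹
    _ = v ᵥ* (Cᵀ * A) ᵥ* (Cᵀ * A)⁻¹ := by rw [← vecMul_transpose, vecMul_vecMul v]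
    _ = v := by rw [vecMul_vecMul, mul_nonsing_inv _ hdet, vecMul_one]

/-- A scalar `s` in place of `1 / n` avoids dividing by the number of rows, which need not be
invertible in `R`. -/
theorem mean_in_partition_intersection_general (hC : C *ᵥ 1 = 1) (hM : IsUnit (Cᵀ * A)) (s : R) :
    (s • ∑ i, A.row i) ᵥ* (Cᵀ * A)⁻¹ = s • 1 := by
  have hsum : ∑ i, A.row i = (C *ᵥ 1) ᵥ* A := by
    rw [hC]
    exact (one_vecMul A).symm
  rw [smul_vecMul, hsum, mulVec_vecMul_vecMul_inv_transpose_mul hM]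

end RowSums

/-- For a hard clustering matrix `C` (encoded by `g`) with `M = Cᵀ Ã`
invertible, the mean `ā` of the rows of `Ã` satisfies `ā M⁻¹ = (1/n) 1ᵀ`: every entry of the
row vector `ā M⁻¹` equals `1/n`. -/
theorem mean_in_partition_intersection (n k : ℕ)
    (Atil : Matrix (Fin n) (Fin k) ℝ)
    (g : Fin n → Fin k) (C : Matrix (Fin n) (Fin k) ℝ)
    (hC : C = fun i c => if g i = c then 1 else 0)
    (M : Matrix (Fin k) (Fin k) ℝ) (hM : M = Cᵀ * Atil) (hMinv : IsUnit M)
    (abar : Fin k → ℝ) (habar : ∀ r, abar r = (1 / n : ℝ) * ∑ i, Atil i r) :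
    ∀ c : Fin k, ∑ r, abar r * M⁻¹ r c = 1 / n := by
  subst hC hM
  simpa [funext habar, vecMul, dotProduct] using congrFun
    (mean_in_partition_intersection_general (hardClusteringMatrix_mulVec g 1) hMinv (1 / n : ℝ))
end

section
/- Let A be an n×d real matrix and C an n×(d+1) hard clustering matrix with k = d+1 clusters, each cluster c nonempty with size n_c. Let ā_c ∈ ℝ^{1×d} denote the mean of the rows of A belonging to cluster c. Then Cᵀ[A | 1] = diag(n₁, …, n_{d+1}) · B, where B is the (d+1)×(d+1) matrix whose c-th row is [ā_c, 1]; consequently det(Cᵀ[A | 1]) = (∏_{c=1}^{d+1} n_c) · det(B). (Thus the DMI-score equals, up to the constant factor d!, the volume of the simplex with vertices the cluster means multiplied by the product of the cluster sizes.) -/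
/-!
Left multiplication by `Cᵀ` sums rows over each cluster, so for every matrix `M` it is averaging
over the clusters followed by scaling with the cluster sizes: `Cᵀ * M = diag(n_c) * M̄`. Averaging
acts on each column separately and, over a nonempty cluster, fixes the constant `1`; hence the
cluster means of `[A | 1]` form the matrix `[Ā | 1]`.
-/

open Matrix

namespace HardClustering

open scoped BigOperators

variable {ι κ μ R : Type*}

/-- The hard clustering matrix `C` of the assignment `g` of rows to clusters. Taking `g` as the
datum encodes that every row of `C` has exactly one entry `1`. -/
def clusteringMatrix (R : Type*) [Zero R] [One R] [DecidableEq κ] (g : ι → κ) : Matrix ι κ R :=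
  .of fun i c => if g i = c then 1 else 0

/-- The augmented matrix `[A | 1]`; the column of ones has index `Fin.last d`. -/
def appendOnes [One R] {d : ℕ} (A : Matrix ι (Fin d) R) : Matrix ι (Fin (d + 1)) R :=
  .of fun i => Fin.snoc (A i) 1

section Clusters

variable [Fintype ι] [DecidableEq κ]

/-- The number `n_c` of rows in cluster `c`. -/
def clusterSize (g : ι → κ) (c : κ) : ℕ :=
  Finset.card {i | g i = c}

/-- The matrix whose `c`-th row is the mean `ā_c` of the rows of `A` in cluster `c`; an empty
cluster gets the junk row `0`. -/
def clusterMean [AddCommMonoid R] [Module ℚ≥0 R] (g : ι → κ) (A : Matrix ι μ R) : Matrix κ μ R :=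
  .of fun c j => 𝔼 i with g i = c, A i j

theorem clusterMean_apply_eq_sum_div {K : Type*} [Semifield K] [CharZero K] (g : ι → κ)
    (A : Matrix ι μ K) (c : κ) (j : μ) :
    clusterMean g A c j = (∑ i with g i = c, A i j) / clusterSize g c :=
  Finset.expect_eq_sum_div_card _ _

theorem clusterMean_appendOnes [AddCommMonoidWithOne R] [Module ℚ≥0 R] {d : ℕ} {g : ι → κ}
    (hg : g.Surjective) (A : Matrix ι (Fin d) R) :
    clusterMean g (appendOnes A) = appendOnes (clusterMean g A) := by
  ext c j
  cases j using Fin.lastCases with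
  | cast j => simp [clusterMean, appendOnes]
  | last =>
    have hc : Finset.Nonempty {i | g i = c} := (hg c).imp (by simp)
    simp [clusterMean, appendOnes, Finset.expect_const hc]

variable [NonAssocSemiring R]

theorem transpose_clusteringMatrix_mul_apply (g : ι → κ) (M : Matrix ι μ R) (c : κ) (j : μ) :
    ((clusteringMatrix R g)ᵀ * M) c j = ∑ i with g i = c, M i j := by
  simp [clusteringMatrix, mul_apply, Finset.sum_filter]

theorem transpose_clusteringMatrix_mul [Fintype κ] [Module ℚ≥0 R] (g : ι → κ) (M : Matrix ι μ R) :
    (clusteringMatrix R g)ᵀ * M = diagonal (fun c => (clusterSize g c : R)) * clusterMean g M := by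
  ext c j
  calc ((clusteringMatrix R g)ᵀ * M) c j
      = ∑ i with g i = c, M i j := transpose_clusteringMatrix_mul_apply g M c j
    _ = clusterSize g c • clusterMean g M c j := (Finset.card_smul_expect _ _).symm
    _ = (diagonal (fun c => (clusterSize g c : R)) * clusterMean g M) c j := by
      rw [diagonal_mul, nsmul_eq_mul]

theorem transpose_clusteringMatrix_mul_appendOnes [Fintype κ] [Module ℚ≥0 R] {d : ℕ}
    {g : ι → κ} (hg : g.Surjective) (A : Matrix ι (Fin d) R) :
    (clusteringMatrix R g)ᵀ * appendOnes A =
      diagonal (fun c => (clusterSize g c : R)) * appendOnes (clusterMean g A) := by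
  rw [transpose_clusteringMatrix_mul, clusterMean_appendOnes hg]

end Clusters

end HardClustering

open HardClustering in
theorem dmi_score_eq_simplex_volume_general {ι R : Type*} [Fintype ι] [CommRing R] [Module ℚ≥0 R]
    {d : ℕ} (A : Matrix ι (Fin d) R) {g : ι → Fin (d + 1)} (hg : g.Surjective) :
    (clusteringMatrix R g)ᵀ * appendOnes A =
      diagonal (fun c => (clusterSize g c : R)) * appendOnes (clusterMean g A) ∧
    ((clusteringMatrix R g)ᵀ * appendOnes A).det =
      (∏ c, (clusterSize g c : R)) * (appendOnes (clusterMean g A)).det := by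
  have factorization := transpose_clusteringMatrix_mul_appendOnes hg A
  exact ⟨factorization, by rw [factorization, det_mul, det_diagonal]⟩

/-- For an n×d matrix `A` and a hard clustering matrix `C` with `d+1`
nonempty clusters (assignment `g`, sizes `nc`, cluster means `abar c`),
`Cᵀ [A | 1] = diag(n₁, …, n_{d+1}) ⬝ B` where the `c`-th row of `B` is `[ā_c, 1]`; hence
`det(Cᵀ [A | 1]) = (∏ c, n_c) * det B`. -/
theorem dmi_score_eq_simplex_volume (n d : ℕ) (A : Matrix (Fin n) (Fin d) ℝ)
    (g : Fin n → Fin (d + 1)) (hnonempty : ∀ c, ∃ i, g i = c)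
    (C : Matrix (Fin n) (Fin (d + 1)) ℝ)
    (hC : C = fun i c => if g i = c then 1 else 0)
    (augA : Matrix (Fin n) (Fin (d + 1)) ℝ)
    (haug : augA = fun i (j : Fin (d + 1)) => if h : (j : ℕ) < d then A i ⟨j, h⟩ else 1)
    (nc : Fin (d + 1) → ℕ)
    (hnc : ∀ c, nc c = (Finset.univ.filter fun i => g i = c).card)
    (abar : Fin (d + 1) → Fin d → ℝ)
    (habar : ∀ c j, abar c j = (∑ i ∈ Finset.univ.filter fun i => g i = c, A i j) / nc c)
    (B : Matrix (Fin (d + 1)) (Fin (d + 1)) ℝ)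
    (hB : B = fun c (j : Fin (d + 1)) => if h : (j : ℕ) < d then abar c ⟨j, h⟩ else 1) :
    Cᵀ * augA = Matrix.diagonal (fun c => (nc c : ℝ)) * B ∧
    (Cᵀ * augA).det = (∏ c, (nc c : ℝ)) * B.det := by
  obtain rfl : nc = HardClustering.clusterSize g := funext hnc
  obtain rfl : abar = HardClustering.clusterMean g A :=
    funext₂ fun c j => (habar c j).trans (HardClustering.clusterMean_apply_eq_sum_div g A c j).symm
  subst hC haug hB
  exact dmi_score_eq_simplex_volume_general A hnonempty
end

section
/- (DMI-clustering of 1-dimensional points.) Let a₁, …, aₙ be real numbers, not all equal, with mean ā. For p ∈ {0,1}ⁿ define f(p) = det([p, 1−p]ᵀ [a | 1]), where [p, 1−p] is the n×2 matrix with columns p and 1−p and [a | 1] is the n×2 matrix with columns (a₁,…,aₙ) and the all-ones vector. Then f(p) = n · Σᵢ pᵢ(aᵢ − ā), the maximum of f over p ∈ {0,1}ⁿ equals n · Σ_{i : aᵢ > ā} (aᵢ − ā) > 0, and a vector p ∈ {0,1}ⁿ attains the maximum if and only if pᵢ = 1 for every i with aᵢ > ā and pᵢ = 0 for every i with aᵢ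 < ā (indices with aᵢ = ā may be assigned arbitrarily). Hence DMI-clustering partitions the numbers into the above-average cluster and the below-average cluster. -/
open Matrix

/-!
Let `d i = a i - abar`, so that `∑ i, d i = 0`. The determinant equals
`card ι * ∑ i, p i * a i - (∑ i, p i) * ∑ i, a i`, which is `card ι * ∑ i, p i * d i`. This is
separable in the coordinates of `p`: a weight `x ∈ [0, 1]` satisfies `x * d i ≤ (d i)⁺`, with
equality iff `x = 1` when `0 < d i` and `x = 0` when `d i < 0`. Equality is attained by weights in
`{0, 1}`, so every set `T` of admissible weights with `{0, 1} ⊆ T ⊆ [0, 1]` gives the same maximum: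
`T = {0, 1}` is hard clustering, `T = [0, 1]` soft clustering. The maximum is positive unless all
`d i` vanish, because the `d i` sum to zero.
-/

section DMIObjective

variable {ι R : Type*} [Fintype ι] [CommRing R]

/-- The objective `det([p, 1 - p]ᵀ [a | 1])` of DMI-clustering of the one-dimensional data `a`, for
a clustering that puts the point `i` into the first cluster with weight `p i` and into the second
with weight `1 - p i`. The weights are arbitrary; a hard clustering is one with values in `{0, 1}`.
-/
def dmiObjective (a p : ι → R) : R :=
  ((Matrix.of fun i (j : Fin 2) => if j = 0 then p i else 1 - p i)ᵀ *
    (Matrix.of fun i (j : Fin 2) => if j = 0 then a i else 1)).det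

lemma dmiObjective_eq_card_mul_sum_sub (a p : ι → R) :
    dmiObjective a p = Fintype.card ι * ∑ i, p i * a i - (∑ i, p i) * ∑ i, a i := by
  simp only [dmiObjective, det_fin_two, mul_apply, transpose_apply, of_apply, if_true, one_ne_zero,
    if_false, mul_one, sub_mul, one_mul, Finset.sum_sub_distrib, Finset.sum_const,
    Finset.card_univ, nsmul_eq_mul]
  ring

lemma dmiObjective_eq_card_mul_sum_mul_sub {a : ι → R} {m : R}
    (hm : ∑ i, a i = Fintype.card ι * m) (p : ι → R) :
    dmiObjective a p = Fintype.card ι * ∑ i, p i * (a i - m) := by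
  simp only [dmiObjective_eq_card_mul_sum_sub, hm, mul_sub, Finset.sum_sub_distrib,
    ← Finset.sum_mul]
  ring

end DMIObjective

section PosPart

variable {ι R : Type*} [Ring R] [LinearOrder R]

lemma mul_le_posPart_of_mem_Icc [IsOrderedRing R] {x : R} (hx : x ∈ Set.Icc 0 1) (d : R) :
    x * d ≤ d⁺ :=
  calc
    x * d ≤ x * d⁺ := mul_le_mul_of_nonneg_left (le_posPart d) hx.1
    _ ≤ d⁺ := mul_le_of_le_one_left (posPart_nonneg d) hx.2

variable [IsStrictOrderedRing R]

lemma mul_eq_posPart_iff {x d : R} : x * d = d⁺ ↔ (0 < d → x = 1) ∧ (d < 0 → x = 0) := by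
  rcases lt_trichotomy d 0 with hd | rfl | hd
  · simp [posPart_of_nonpos hd.le, hd, hd.ne, hd.not_gt]
  · simp
  · simp [posPart_of_nonneg hd.le, hd, hd.ne', hd.not_gt]

lemma sum_mul_eq_sum_posPart_iff {s : Finset ι} {p d : ι → R} (hp : ∀ i ∈ s, p i ∈ Set.Icc 0 1) :
    ∑ i ∈ s, p i * d i = ∑ i ∈ s, (d i)⁺ ↔
      ∀ i ∈ s, (0 < d i → p i = 1) ∧ (d i < 0 → p i = 0) := by
  rw [Finset.sum_eq_sum_iff_of_le fun i hi => mul_le_posPart_of_mem_Icc (hp i hi) (d i)]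
  simp only [mul_eq_posPart_iff]

lemma isGreatest_sum_mul {T : Set R} (hT₀₁ : {0, 1} ⊆ T) (hT : T ⊆ Set.Icc 0 1)
    (s : Finset ι) (d : ι → R) :
    IsGreatest ((fun p : ι → R => ∑ i ∈ s, p i * d i) '' {p | ∀ i, p i ∈ T})
      (∑ i ∈ s, (d i)⁺) := by
  constructor
  · have hmem (i : ι) : (if 0 < d i then 1 else 0) ∈ T := by
      split_ifs <;> exact hT₀₁ (by simp)
    refine ⟨fun i => if 0 < d i then 1 else 0, hmem, ?_⟩
    exact (sum_mul_eq_sum_posPart_iff fun i _ => hT (hmem i)).2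
      fun i _ => ⟨fun h => if_pos h, fun h => if_neg h.not_gt⟩
  · rintro _ ⟨p, hp, rfl⟩
    exact Finset.sum_le_sum fun i _ => mul_le_posPart_of_mem_Icc (hT (hp i)) (d i)

end PosPart

section Deviations

variable {ι G : Type*} [AddCommGroup G] [LinearOrder G] [IsOrderedAddMonoid G]

lemma sum_filter_lt_sub_eq_sum_posPart (s : Finset ι) (a : ι → G) (m : G) :
    ∑ i ∈ s with m < a i, (a i - m) = ∑ i ∈ s, (a i - m)⁺ := by
  rw [Finset.sum_filter]
  refine Finset.sum_congr rfl fun i _ => ?_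
  split_ifs with h
  · exact (posPart_of_nonneg (sub_nonneg.2 h.le)).symm
  · exact (posPart_of_nonpos (sub_nonpos.2 (not_lt.1 h))).symm

lemma sum_posPart_pos_iff_of_sum_eq_zero {s : Finset ι} {d : ι → G} (hd : ∑ i ∈ s, d i = 0) :
    0 < ∑ i ∈ s, (d i)⁺ ↔ ∃ i ∈ s, d i ≠ 0 := by
  rw [Finset.sum_pos_iff_of_nonneg fun i _ => posPart_nonneg (d i)]
  simp only [posPart_pos_iff]
  exact ⟨fun ⟨i, hi, hpos⟩ => ⟨i, hi, hpos.ne'⟩,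
    Finset.exists_pos_of_sum_zero_of_exists_nonzero d hd⟩

end Deviations

section Mean

variable {ι K : Type*} [Fintype ι] [Nonempty ι]

lemma sum_eq_card_mul_sum_div_card [Field K] [CharZero K] (a : ι → K) :
    ∑ i, a i = Fintype.card ι * ((∑ i, a i) / Fintype.card ι) :=
  (mul_div_cancel₀ _ (Nat.cast_ne_zero.2 Fintype.card_ne_zero)).symm

lemma exists_ne_mean_iff [Semiring K] [IsLeftCancelMulZero K] [CharZero K] {a : ι → K} {m : K}
    (hm : ∑ i, a i = Fintype.card ι * m) : (∃ i, a i ≠ m) ↔ ∃ i j, a i ≠ a j := by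
  have hcard : (Fintype.card ι : K) ≠ 0 := Nat.cast_ne_zero.2 Fintype.card_ne_zero
  constructor
  · contrapose!
    intro hconst i
    refine mul_left_cancel₀ hcard ?_
    calc
      Fintype.card ι * a i = ∑ _j : ι, a i := by
        rw [Finset.sum_const, Finset.card_univ, nsmul_eq_mul]
      _ = ∑ j, a j := Finset.sum_congr rfl fun j _ => hconst i j
      _ = Fintype.card ι * m := hm
  · contrapose!
    exact fun h i j => (h i).trans (h j).symm

end Mean

theorem dmi_clustering_one_dim_general {ι K : Type*} [Fintype ι] [Nonempty ι]
    [Field K] [LinearOrder K] [IsStrictOrderedRing K] {T : Set K} (hT₀₁ : {0, 1} ⊆ T)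
    (hT : T ⊆ Set.Icc 0 1) (a : ι → K) (abar : K) (habar : abar = (∑ i, a i) / Fintype.card ι) :
    (∀ p : ι → K, dmiObjective a p = Fintype.card ι * ∑ i, p i * (a i - abar)) ∧
    (0 < Fintype.card ι * ∑ i with abar < a i, (a i - abar) ↔ ∃ i j, a i ≠ a j) ∧
    IsGreatest {x : K | ∃ p : ι → K, (∀ i, p i ∈ T) ∧ x = dmiObjective a p}
      (Fintype.card ι * ∑ i with abar < a i, (a i - abar)) ∧
    (∀ p : ι → K, (∀ i, p i ∈ T) →
      (dmiObjective a p = Fintype.card ι * ∑ i with abar < a i, (a i - abar) ↔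
        (∀ i, abar < a i → p i = 1) ∧ (∀ i, a i < abar → p i = 0))) := by
  have hcard : (0 : K) < Fintype.card ι := Nat.cast_pos.2 Fintype.card_pos
  have hsum : ∑ i, a i = Fintype.card ι * abar := habar ▸ sum_eq_card_mul_sum_div_card a
  have hobj := dmiObjective_eq_card_mul_sum_mul_sub hsum
  have hdev : ∑ i, (a i - abar) = 0 := by simp [hsum]
  rw [sum_filter_lt_sub_eq_sum_posPart]
  refine ⟨hobj, ?_, ?_, fun p hp => ?_⟩
  · rw [mul_pos_iff_of_pos_left hcard, sum_posPart_pos_iff_of_sum_eq_zero hdev,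
      ← exists_ne_mean_iff hsum]
    simp only [Finset.mem_univ, true_and, sub_ne_zero]
  · have hmax := (monotone_mul_left_of_nonneg hcard.le).map_isGreatest
      (isGreatest_sum_mul hT₀₁ hT Finset.univ fun i => a i - abar)
    simp only [Set.image_image, ← hobj] at hmax
    simpa only [Set.image, Set.mem_ofPred_eq, eq_comm] using hmax
  · rw [hobj, mul_right_inj' hcard.ne', sum_mul_eq_sum_posPart_iff fun i _ => hT (hp i)]
    simp only [Finset.mem_univ, true_imp_iff, sub_pos, sub_neg, forall_and]

/-- **DMI-clustering of 1-dimensional points.** For reals `a₁, …, aₙ`, not all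
equal, with mean `ā`, and `f p = det([p, 1−p]ᵀ [a | 1])` for 0-1 vectors `p`:
`f p = n · Σᵢ pᵢ (aᵢ − ā)`; the maximum of `f` over `{0,1}ⁿ` is `n · Σ_{aᵢ > ā} (aᵢ − ā) > 0`;
and a 0-1 vector `p` attains it iff `pᵢ = 1` whenever `aᵢ > ā` and `pᵢ = 0` whenever
`aᵢ < ā`. -/
theorem dmi_clustering_one_dim (n : ℕ) (a : Fin n → ℝ)
    (hne : ∃ i j, a i ≠ a j)
    (abar : ℝ) (habar : abar = (∑ i, a i) / n)
    (f : (Fin n → ℝ) → ℝ)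
    (hf : f = fun p =>
      ((Matrix.of fun i (j : Fin 2) => if j = 0 then p i else 1 - p i)ᵀ *
       (Matrix.of fun i (j : Fin 2) => if j = 0 then a i else 1)).det) :
    (∀ p : Fin n → ℝ, (∀ i, p i = 0 ∨ p i = 1) →
      f p = (n : ℝ) * ∑ i, p i * (a i - abar)) ∧
    (0 < (n : ℝ) * ∑ i ∈ Finset.univ.filter fun i => abar < a i, (a i - abar)) ∧
    IsGreatest {x : ℝ | ∃ p : Fin n → ℝ, (∀ i, p i = 0 ∨ p i = 1) ∧ x = f p}
      ((n : ℝ) * ∑ i ∈ Finset.univ.filter fun i => abar < a i, (a i - abar)) ∧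
    (∀ p : Fin n → ℝ, (∀ i, p i = 0 ∨ p i = 1) →
      (f p = (n : ℝ) * ∑ i ∈ Finset.univ.filter fun i => abar < a i, (a i - abar) ↔
        (∀ i, abar < a i → p i = 1) ∧ (∀ i, a i < abar → p i = 0))) := by
  have : Nonempty (Fin n) := hne.nonempty
  have hgeneral := dmi_clustering_one_dim_general (T := {0, 1}) subset_rfl
    (Set.pair_subset (Set.left_mem_Icc.2 zero_le_one) (Set.right_mem_Icc.2 zero_le_one)) a abar
    (by rwa [Fintype.card_fin])
  rw [Fintype.card_fin] at hgeneral
  obtain ⟨hobj, hpos, hmax_iff⟩ := hgeneral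
  subst hf
  exact ⟨fun p _ => hobj p, hpos.2 hne, hmax_iff⟩
end

section
/- Let A be an n×C real matrix and S a C×C row-stochastic real matrix (nonnegative entries, each row sums to 1). Then for every n×C real matrix M, |det(Mᵀ A S)| = |det(Mᵀ A)| · |det(S)| ≤ |det(Mᵀ A)|; consequently, for any subset 𝒞 of ℝ^{n×C}, sup_{M ∈ 𝒞} |det(Mᵀ A S)| ≤ sup_{M ∈ 𝒞} |det(Mᵀ A)|. (In the K-DMI mechanism this says the DMI-clustering score v decreases, i.e. does not increase, when agents perform strategies, since the absolute determinant of any transition matrix is at most one.) -/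
open Matrix

/-!
The determinant is multiplicative, so everything rests on `|det S| ≤ 1`. By the Leibniz formula,
`|det S|` is at most the sum of `∏ i, |S i (σ i)|` over permutations `σ`; letting `σ` range over all
self-maps of the index set instead gives the product over `i` of the row sums `∑ j, |S i j|`. For
the suprema, `S` scales every score by `|det S|`, and real suprema commute with nonnegative scaling.
-/

section RowSums

variable {n R : Type*} [Fintype n] [DecidableEq n]

theorem permanent_le_prod_row_sum [CommSemiring R] [PartialOrder R] [IsOrderedRing R]
    {M : Matrix n n R} (hM : ∀ i j, 0 ≤ M i j) : M.permanent ≤ ∏ i, ∑ j, M i j := by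
  have hprod (f : n → n) : 0 ≤ ∏ i, M i (f i) := Finset.prod_nonneg fun i _ => hM i (f i)
  calc M.permanent = ∑ σ : Equiv.Perm n, ∏ i, M i (σ i) := by
        rw [← permanent_transpose]; rfl
    _ = ∑ f ∈ Finset.univ.map ⟨fun σ : Equiv.Perm n => ⇑σ, DFunLike.coe_injective⟩,
          ∏ i, M i (f i) := by
        rw [Finset.sum_map]; rfl
    _ ≤ ∑ f : n → n, ∏ i, M i (f i) := Finset.sum_le_univ_sum_of_nonneg hprod
    _ = ∏ i, ∑ j, M i j := (Fintype.prod_sum _).symm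

variable [CommRing R] [LinearOrder R] [IsStrictOrderedRing R]

theorem abs_det_le_permanent_map_abs (M : Matrix n n R) : |M.det| ≤ (M.map abs).permanent := by
  have abs_sign (σ : Equiv.Perm n) : |((Equiv.Perm.sign σ : ℤ) : R)| = 1 := by
    rw [← Int.cast_abs, Int.isUnit_iff_abs_eq.mp (Units.isUnit _), Int.cast_one]
  calc |M.det| ≤ ∑ σ : Equiv.Perm n, |(Equiv.Perm.sign σ : ℤ) * ∏ i, M (σ i) i| := by
        rw [det_apply']; exact Finset.abs_sum_le_sum_abs _ _
    _ = (M.map abs).permanent := by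
        simp only [abs_mul, abs_sign, one_mul, Finset.abs_prod, permanent, map_apply]

theorem abs_det_le_prod_row_sum_abs (M : Matrix n n R) : |M.det| ≤ ∏ i, ∑ j, |M i j| :=
  (abs_det_le_permanent_map_abs M).trans (permanent_le_prod_row_sum fun _ _ => abs_nonneg _)

theorem abs_det_le_one_of_row_sum_abs_le_one {M : Matrix n n R} (hM : ∀ i, ∑ j, |M i j| ≤ 1) :
    |M.det| ≤ 1 :=
  (abs_det_le_prod_row_sum_abs M).trans <|
    Finset.prod_le_one (fun _ _ => Finset.sum_nonneg fun _ _ => abs_nonneg _) fun i _ => hM i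

end RowSums

-- When `f '' s` is unbounded, the right-hand supremum is the junk value `0`; the left-hand one is
-- then `0` as well.
theorem sSup_image_mul_const_le {α : Type*} {f : α → ℝ} {s : Set α} {c : ℝ}
    (hf : ∀ x ∈ s, 0 ≤ f x) (hc₀ : 0 ≤ c) (hc₁ : c ≤ 1) :
    sSup ((fun x => f x * c) '' s) ≤ sSup (f '' s) := by
  have hscale : (fun x => f x * c) '' s = (fun y => c • y) '' (f '' s) := by
    simp only [Set.image_image, smul_eq_mul, mul_comm]
  rw [hscale, Set.image_smul, Real.sSup_smul_of_nonneg hc₀]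
  exact mul_le_of_le_one_left (Real.sSup_nonneg (Set.forall_mem_image.mpr hf)) hc₁

theorem abs_det_mul_mul {m n R : Type*} [Fintype m] [Fintype n] [DecidableEq n] [CommRing R]
    [LinearOrder R] [IsOrderedRing R] (B : Matrix n m R) (A : Matrix m n R) (S : Matrix n n R) :
    |(B * (A * S)).det| = |(B * A).det| * |S.det| := by
  rw [← Matrix.mul_assoc, det_mul, abs_mul]

theorem dmi_score_decreases_under_strategies_general {m n : Type*} [Fintype m] [Fintype n]
    [DecidableEq n] (A : Matrix m n ℝ) (S : Matrix n n ℝ) (hS : ∀ i, ∑ j, |S i j| ≤ 1) :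
    (∀ M : Matrix m n ℝ,
      |(Mᵀ * (A * S)).det| = |(Mᵀ * A).det| * |S.det| ∧
      |(Mᵀ * (A * S)).det| ≤ |(Mᵀ * A).det|) ∧
    (∀ 𝒞 : Set (Matrix m n ℝ),
      sSup ((fun M => |(Mᵀ * (A * S)).det|) '' 𝒞) ≤
        sSup ((fun M => |(Mᵀ * A).det|) '' 𝒞)) := by
  have hdet : |S.det| ≤ 1 := abs_det_le_one_of_row_sum_abs_le_one hS
  refine ⟨fun M => ⟨abs_det_mul_mul Mᵀ A S, ?_⟩, fun 𝒞 => ?_⟩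
  · rw [abs_det_mul_mul]
    exact mul_le_of_le_one_right (abs_nonneg _) hdet
  · simp only [abs_det_mul_mul]
    exact sSup_image_mul_const_le (fun _ _ => abs_nonneg _) (abs_nonneg _) hdet

/-- For any n×C matrix `A` and row-stochastic C×C matrix `S`:
`|det(Mᵀ A S)| = |det(Mᵀ A)| · |det S| ≤ |det(Mᵀ A)|` for every `M`, and consequently for
every constraint set `𝒞`, `sup_{M ∈ 𝒞} |det(Mᵀ A S)| ≤ sup_{M ∈ 𝒞} |det(Mᵀ A)|`. -/
theorem dmi_score_decreases_under_strategies (n C : ℕ)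
    (A : Matrix (Fin n) (Fin C) ℝ) (S : Matrix (Fin C) (Fin C) ℝ)
    (hnn : ∀ i j, 0 ≤ S i j) (hrow : ∀ i, ∑ j, S i j = 1) :
    (∀ M : Matrix (Fin n) (Fin C) ℝ,
      |(Mᵀ * (A * S)).det| = |(Mᵀ * A).det| * |S.det| ∧
      |(Mᵀ * (A * S)).det| ≤ |(Mᵀ * A).det|) ∧
    (∀ 𝒞 : Set (Matrix (Fin n) (Fin C) ℝ),
      sSup ((fun M => |(Mᵀ * (A * S)).det|) '' 𝒞) ≤
        sSup ((fun M => |(Mᵀ * A).det|) '' 𝒞)) :=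
  dmi_score_decreases_under_strategies_general A S fun i => by
    simp only [abs_of_nonneg (hnn i _), hrow, le_refl]
end

section
/- (Polynomially many linear partitions.) Fix k ≥ 2 and let Ã be an n×k real matrix with rows ã₁, …, ãₙ ∈ ℝ^{1×k}. For a k×k real matrix D with columns d₁, …, d_k, define the cluster-1 set of D as {i ∈ [n] : ãᵢ · d₁ > ãᵢ · d_c for all c ≠ 1}. Then the number of distinct subsets of [n] arising as cluster-1 sets over all D ∈ ℝ^{k×k} is at most (n+1)^{(k−1)(k+1)}; in particular, for fixed k it is polynomial in n. -/
open Matrix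

/-!
With `f c` the columns of `Ã * D`, the cluster set is the intersection over `c ≠ c₀` of the
positivity sets `{i | 0 < g i}` of the functions `g = f c₀ - f c`, which lie in the column space of
`Ã`. By an argument of Dudley, the positivity sets of a `d`-dimensional space `W` of functions have
VC dimension at most `d`: if they shatter `s`, then evaluations at the points of `s` are linearly
independent on `W`. Indeed, given a relation `∑ i ∈ s, a i * g i = 0` valid for all `g ∈ W`, choose
`g` positive on `s` exactly where `a` is positive; all terms are then nonnegative, hence zero, so
`a` has no positive value on `s`, and the same goes for `-a`. The Sauer–Shelah lemma bounds the
number of positivity sets by `(n + 1) ^ d`.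
-/

open Finset Module

section SauerShelah

variable {α κ : Type*}

lemma sum_range_choose_le_add_one_pow (n d : ℕ) :
    ∑ j ∈ range (d + 1), n.choose j ≤ (n + 1) ^ d := by
  rw [add_pow]
  refine sum_le_sum fun j hj ↦ ?_
  have choose_pos : 0 < d.choose j := Nat.choose_pos (mem_range_succ_iff.1 hj)
  simpa only [one_pow, mul_one, Nat.cast_id] using
    (Nat.choose_le_pow n j).trans (Nat.le_mul_of_pos_right _ choose_pos)

lemma card_le_add_one_pow_vcDim [Fintype α] [DecidableEq α] (𝒜 : Finset (Finset α)) :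
    #𝒜 ≤ (Fintype.card α + 1) ^ 𝒜.vcDim :=
  calc
    #𝒜 ≤ #𝒜.shatterer := card_le_card_shatterer 𝒜
    _ ≤ ∑ j ∈ Iic 𝒜.vcDim, (Fintype.card α).choose j := card_shatterer_le_sum_vcDim
    _ = ∑ j ∈ range (𝒜.vcDim + 1), (Fintype.card α).choose j := by
      rw [Nat.range_succ_eq_Iic]
    _ ≤ (Fintype.card α + 1) ^ 𝒜.vcDim := sum_range_choose_le_add_one_pow _ _

lemma ncard_image_iInter_le_card_pow [Fintype κ] (𝒜 : Finset (Finset α)) :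
    ((fun t : κ → Finset α ↦ ⋂ c, (t c : Set α)) '' {t | ∀ c, t c ∈ 𝒜}).ncard ≤
      #𝒜 ^ Fintype.card κ := by
  classical
  have choices_eq : {t : κ → Finset α | ∀ c, t c ∈ 𝒜} = Fintype.piFinset fun _ : κ ↦ 𝒜 := by
    ext t
    simp only [Set.mem_ofPred_eq, mem_coe, Fintype.mem_piFinset]
  calc
    _ ≤ {t : κ → Finset α | ∀ c, t c ∈ 𝒜}.ncard :=
      Set.ncard_image_le (choices_eq ▸ finite_toSet _)
    _ = #𝒜 ^ Fintype.card κ := by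
      rw [choices_eq, Set.ncard_coe_finset, Fintype.card_piFinset, prod_const, card_univ]

end SauerShelah

section PositivitySets

variable {ι R : Type*} [Fintype ι]

open Classical in
/-- The family of positivity sets `{i | 0 < f i}` of the functions `f ∈ F`. For `F` the column space
of a matrix, these are the traces of the homogeneous open halfspaces on its rows. They are finsets,
so that Mathlib's theory of shattering applies. -/
noncomputable def positivitySets [Zero R] [LT R] (F : Set (ι → R)) : Finset (Finset ι) :=
  {S | ∃ f ∈ F, ∀ i, i ∈ S ↔ 0 < f i}

lemma mem_positivitySets [Zero R] [LT R] {F : Set (ι → R)} {S : Finset ι} :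
    S ∈ positivitySets F ↔ ∃ f ∈ F, ∀ i, i ∈ S ↔ 0 < f i := by
  simp only [positivitySets, mem_filter, mem_univ, true_and]

variable [DecidableEq ι] {s : Finset ι}

lemma exists_pos_iff_of_shatters [Zero R] [LT R] {F : Set (ι → R)}
    (hs : (positivitySets F).Shatters s) (p : ι → Prop) :
    ∃ f ∈ F, ∀ i ∈ s, 0 < f i ↔ p i := by
  classical
  obtain ⟨S, hS, hSs⟩ := hs (filter_subset p s)
  obtain ⟨f, hf, hfS⟩ := mem_positivitySets.1 hS
  refine ⟨f, hf, fun i hi ↦ ?_⟩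
  rw [← hfS]
  simpa only [mem_inter, mem_filter, hi, true_and] using Finset.ext_iff.1 hSs i

lemma nonpos_of_shatters_of_sum_mul_eq_zero [Ring R] [LinearOrder R] [IsStrictOrderedRing R]
    {F : Set (ι → R)} (hs : (positivitySets F).Shatters s) {a : ι → R}
    (ha : ∀ f ∈ F, ∑ i ∈ s, a i * f i = 0) : ∀ i ∈ s, a i ≤ 0 := by
  obtain ⟨f, hf, f_pos_iff⟩ := exists_pos_iff_of_shatters hs (0 < a ·)
  have terms_nonneg : ∀ i ∈ s, 0 ≤ a i * f i := fun i hi ↦ by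
    rcases lt_or_ge 0 (a i) with a_pos | a_nonpos
    · exact (mul_pos a_pos ((f_pos_iff i hi).2 a_pos)).le
    · have f_nonpos : f i ≤ 0 := not_lt.1 (mt (f_pos_iff i hi).1 a_nonpos.not_gt)
      exact mul_nonneg_of_nonpos_of_nonpos a_nonpos f_nonpos
  intro i hi
  by_contra! a_pos
  have term_eq_zero : a i * f i = 0 := (sum_eq_zero_iff_of_nonneg terms_nonneg).1 (ha f hf) i hi
  exact (mul_pos a_pos ((f_pos_iff i hi).2 a_pos)).ne' term_eq_zero

end PositivitySets

section FunctionSpace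

variable {ι 𝕜 : Type*} [Fintype ι] [Field 𝕜] [LinearOrder 𝕜] [IsStrictOrderedRing 𝕜]

lemma linearIndepOn_proj_of_shatters [DecidableEq ι] {W : Submodule 𝕜 (ι → 𝕜)} {s : Finset ι}
    (hs : (positivitySets (W : Set (ι → 𝕜))).Shatters s) :
    LinearIndepOn 𝕜 (fun i ↦ (LinearMap.proj i : Dual 𝕜 (ι → 𝕜)).domRestrict W) (s : Set ι) := by
  rw [linearIndepOn_finset_iff]
  intro a ha i hi
  have relation : ∀ f ∈ W, ∑ i ∈ s, a i * f i = 0 := fun f hf ↦ by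
    simpa using LinearMap.congr_fun ha ⟨f, hf⟩
  have neg_relation : ∀ f ∈ W, ∑ i ∈ s, (-a) i * f i = 0 := fun f hf ↦ by
    simpa using relation f hf
  exact le_antisymm (nonpos_of_shatters_of_sum_mul_eq_zero hs relation i hi)
    (neg_nonpos.1 (nonpos_of_shatters_of_sum_mul_eq_zero hs neg_relation i hi))

lemma vcDim_positivitySets_le_finrank [DecidableEq ι] (W : Submodule 𝕜 (ι → 𝕜)) :
    (positivitySets (W : Set (ι → 𝕜))).vcDim ≤ finrank 𝕜 W := by
  refine Finset.sup_le fun s hs ↦ ?_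
  have card_le : Fintype.card s ≤ finrank 𝕜 (Dual 𝕜 W) :=
    (linearIndepOn_proj_of_shatters (mem_shatterer.1 hs)).fintype_card_le_finrank
  rwa [Fintype.card_coe, Subspace.dual_finrank_eq] at card_le

lemma card_positivitySets_le_pow_finrank (W : Submodule 𝕜 (ι → 𝕜)) :
    #(positivitySets (W : Set (ι → 𝕜))) ≤ (Fintype.card ι + 1) ^ finrank 𝕜 W := by
  classical
  exact (card_le_add_one_pow_vcDim _).trans
    (Nat.pow_le_pow_right (Nat.succ_pos _) (vcDim_positivitySets_le_finrank W))

variable {κ : Type*}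

lemma exists_iInter_positivitySets_eq {W : Submodule 𝕜 (ι → 𝕜)} {f : κ → ι → 𝕜}
    (hf : ∀ c, f c ∈ W) (c₀ : κ) :
    ∃ t : {c // c ≠ c₀} → Finset ι, (∀ c, t c ∈ positivitySets (W : Set (ι → 𝕜))) ∧
      ⋂ c, (t c : Set ι) = {i | ∀ c ≠ c₀, f c i < f c₀ i} := by
  refine ⟨fun c ↦ {i | 0 < (f c₀ - f c) i}, fun c ↦ ?_, ?_⟩
  · exact mem_positivitySets.2 ⟨_, W.sub_mem (hf c₀) (hf c), fun i ↦ mem_filter_univ i⟩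
  · ext i
    simp

lemma ncard_strict_argmax_sets_le [Fintype κ] (W : Submodule 𝕜 (ι → 𝕜)) (c₀ : κ) :
    {S : Set ι | ∃ f : κ → ι → 𝕜, (∀ c, f c ∈ W) ∧ S = {i | ∀ c ≠ c₀, f c i < f c₀ i}}.ncard ≤
      (Fintype.card ι + 1) ^ ((Fintype.card κ - 1) * finrank 𝕜 W) := by
  classical
  let 𝒜 := positivitySets (W : Set (ι → 𝕜))
  calc
    _ ≤ ((fun t : {c // c ≠ c₀} → Finset ι ↦ ⋂ c, (t c : Set ι)) '' {t | ∀ c, t c ∈ 𝒜}).ncard := by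
      refine Set.ncard_le_ncard ?_
      rintro _ ⟨f, hf, rfl⟩
      exact exists_iInter_positivitySets_eq hf c₀
    _ ≤ #𝒜 ^ Fintype.card {c // c ≠ c₀} := ncard_image_iInter_le_card_pow 𝒜
    _ = #𝒜 ^ (Fintype.card κ - 1) := by rw [Fintype.card_subtype_compl, Fintype.card_subtype_eq]
    _ ≤ ((Fintype.card ι + 1) ^ finrank 𝕜 W) ^ (Fintype.card κ - 1) :=
      Nat.pow_le_pow_left (card_positivitySets_le_pow_finrank W) _
    _ = _ := by rw [← pow_mul, mul_comm]

theorem cluster_one_sets_polynomial_bound_general [Fintype κ] {m : Type*} [Fintype m]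
    (A : Matrix ι m 𝕜) (c₀ : κ) :
    {S : Set ι | ∃ D : Matrix m κ 𝕜,
        S = {i | ∀ c ≠ c₀, (A * D) i c < (A * D) i c₀}}.ncard ≤
      (Fintype.card ι + 1) ^ ((Fintype.card κ - 1) * A.rank) := by
  refine (Set.ncard_le_ncard ?_).trans (ncard_strict_argmax_sets_le A.mulVecLin.range c₀)
  rintro _ ⟨D, rfl⟩
  exact ⟨(A * D)ᵀ, fun c ↦ ⟨Dᵀ c, rfl⟩, rfl⟩

end FunctionSpace

/-- **Polynomially many linear partitions.** Fix `k ≥ 2` and an n×k real matrix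
`Ã` with rows `ãᵢ`. For a k×k matrix `D` with columns `d₁, …, d_k`, the cluster-1 set of `D`
is `{i : ãᵢ · d₁ > ãᵢ · d_c for all c ≠ 1}`. The number of distinct subsets of `[n]` arising
as cluster-1 sets over all `D` is at most `(n+1)^((k−1)(k+1))`. -/
theorem cluster_one_sets_polynomial_bound (k n : ℕ) (hk : 2 ≤ k)
    (Atil : Matrix (Fin n) (Fin k) ℝ) :
    {S : Set (Fin n) | ∃ D : Matrix (Fin k) (Fin k) ℝ,
        S = {i : Fin n | ∀ c : Fin k, c ≠ ⟨0, by omega⟩ →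
          (∑ r, Atil i r * D r c) < ∑ r, Atil i r * D r ⟨0, by omega⟩}}.ncard ≤
      (n + 1) ^ ((k - 1) * (k + 1)) := by
  have rank_le : Atil.rank ≤ k + 1 := Atil.rank_le_width.trans k.le_succ
  refine (cluster_one_sets_polynomial_bound_general Atil (⟨0, by omega⟩ : Fin k)).trans ?_
  simp only [Fintype.card_fin]
  gcongr
  exact n.succ_pos
end
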